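/- Let (s,x̄) ∈ I × U with x̄ = x(s,t(s,x̄)), δ(s,t(s,x̄)) = 0, ∂/∂s(δ(s,t(s,x̄))) = 0, and [x_t(s,t(s,x̄)), c(s,t(s,x̄))] ≠ 0. Then ∂²/∂s²(x(s,t(s,x̄))) = 0. -/

import Mathlib

noncomputable section

/-- `det2 u v` is the determinant of the 2×2 matrix with columns `u` and `v`. -/
def det2 (u v : ℝ × ℝ) : ℝ := u.1 * v.2 - u.2 * v.1

/-- Partial derivative with respect to the first coordinate `s`. -/
def pds (f : ℝ × ℝ → ℝ) (p : ℝ × ℝ) : ℝ := fderiv ℝ f p (1, 0)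

/-- Partial derivative with respect to the second coordinate `t`. -/
def pdt (f : ℝ × ℝ → ℝ) (p : ℝ × ℝ) : ℝ := fderiv ℝ f p (0, 1)

/-- The planar map `x = (A, B)`. -/
def xmap (A B : ℝ × ℝ → ℝ) (p : ℝ × ℝ) : ℝ × ℝ := (A p, B p)

/-- The conjugate map `c = (-D, C)`. -/
def cmap (C D : ℝ × ℝ → ℝ) (p : ℝ × ℝ) : ℝ × ℝ := (-D p, C p)

/-- `x_s = (A_s, B_s)`. -/
def xs (A B : ℝ × ℝ → ℝ) (p : ℝ × ℝ) : ℝ × ℝ := (pds A p, pds B p)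

/-- `x_t = (A_t, B_t)`. -/
def xt (A B : ℝ × ℝ → ℝ) (p : ℝ × ℝ) : ℝ × ℝ := (pdt A p, pdt B p)

/-- `δ = A_s B_t - A_t B_s = [x_s, x_t]`. -/
def deltaMap (A B : ℝ × ℝ → ℝ) (p : ℝ × ℝ) : ℝ :=
  pds A p * pdt B p - pdt A p * pds B p

/-!
Fix `x̄` and write `γ(s) = x(s, t(s, x̄))`. Since `[γ - x̄, c] = 0` along the curve and `γ = x̄` at
the point considered, the leading Taylor coefficient of `γ - x̄` there is parallel to `c`. The
chain rule gives `δ = [γ', x_t]`, so `δ = 0` makes `γ'` parallel to `x_t` as well; as `x_t` and `c`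
are independent, `γ' = 0`. The leading coefficient is then `γ'' / 2`, again parallel to `c`, while
`∂δ/∂s = [γ'', x_t]` because `γ' = 0`. Hence `γ'' = 0`.
-/

open Filter Topology Asymptotics

theorem det2_zero_left (v : ℝ × ℝ) : det2 0 v = 0 := by
  simp [det2]

theorem det2_neg_left (u v : ℝ × ℝ) : det2 (-u) v = -det2 u v := by
  simp only [det2, Prod.fst_neg, Prod.snd_neg]
  ring

theorem det2_smul_left (k : ℝ) (u v : ℝ × ℝ) : det2 (k • u) v = k * det2 u v := by
  simp only [det2, Prod.smul_fst, Prod.smul_snd, smul_eq_mul]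
  ring

theorem det2_add_smul_self_left (k : ℝ) (u v : ℝ × ℝ) : det2 (u + k • v) v = det2 u v := by
  simp only [det2, Prod.fst_add, Prod.snd_add, Prod.smul_fst, Prod.smul_snd, smul_eq_mul]
  ring

theorem det2_smul_eq_sub (u v w : ℝ × ℝ) :
    det2 u v • w = det2 w v • u - det2 w u • v := by
  ext <;>
  · simp only [det2, Prod.fst_sub, Prod.snd_sub, Prod.smul_fst, Prod.smul_snd, smul_eq_mul]
    ring

theorem eq_zero_of_det2_eq_zero {u v w : ℝ × ℝ} (huv : det2 u v ≠ 0) (hwu : det2 w u = 0)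
    (hwv : det2 w v = 0) : w = 0 := by
  have h : det2 u v • w = 0 := by
    rw [det2_smul_eq_sub, hwu, hwv, zero_smul, zero_smul, sub_zero]
  exact (smul_eq_zero.mp h).resolve_left huv

theorem tendsto_det2 {α : Type*} {l : Filter α} {f g : α → ℝ × ℝ} {u v : ℝ × ℝ}
    (hf : Tendsto f l (𝓝 u)) (hg : Tendsto g l (𝓝 v)) :
    Tendsto (fun r => det2 (f r) (g r)) l (𝓝 (det2 u v)) :=
  (hf.fst_nhds.mul hg.snd_nhds).sub (hf.snd_nhds.mul hg.fst_nhds)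

theorem hasDerivAt_det2_of_eq_zero {f g : ℝ → ℝ × ℝ} {f' : ℝ × ℝ} {s : ℝ}
    (hf : HasDerivAt f f' s) (hfs : f s = 0) (hg : ContinuousAt g s) :
    HasDerivAt (fun r => det2 (f r) (g r)) (det2 f' (g s)) s := by
  rw [hasDerivAt_iff_tendsto_slope] at hf ⊢
  refine (tendsto_det2 hf (hg.tendsto.mono_left nhdsWithin_le_nhds)).congr fun r => ?_
  simp only [slope_def_module, hfs, sub_zero, det2_zero_left, det2_smul_left, smul_eq_mul]

section SecondOrder

variable {E : Type*} [NormedAddCommGroup E] [NormedSpace ℝ E] {f f' : ℝ → E} {f'' : E} {s : ℝ}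

theorem isLittleO_sub_taylor_two (hf : ∀ᶠ r in 𝓝 s, HasDerivAt f (f' r) r)
    (hf' : HasDerivAt f' f'' s) :
    (fun r => f r - f s - (r - s) • f' s - ((r - s) ^ 2 / 2) • f'') =o[𝓝 s]
      fun r => (r - s) ^ 2 := by
  obtain ⟨ε, hε, hball⟩ := Metric.eventually_nhds_iff_ball.mp hf
  have hs : s ∈ Metric.ball s ε := Metric.mem_ball_self hε
  have hderiv : ∀ r ∈ Metric.ball s ε, HasDerivWithinAt
      (fun r => f r - f s - (r - s) • f' s - ((r - s) ^ 2 / 2) • f'')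
      (f' r - f' s - (r - s) • f'') (Metric.ball s ε) r := by
    intro r hr
    have hlin : HasDerivAt (fun r => (r - s) • f' s) (f' s) r := by
      simpa using ((hasDerivAt_id r).sub_const s).smul_const (f' s)
    have hsq : HasDerivAt (fun r => (r - s) ^ 2 / 2) (r - s) r := by
      simpa using (((hasDerivAt_id r).sub_const s).pow 2).div_const 2
    exact ((((hball r hr).sub_const (f s)).sub hlin).sub (hsq.smul_const f'')).hasDerivWithinAt
  have hderiv_isLittleO : (fun r => f' r - f' s - (r - s) • f'')
      =o[𝓝[Metric.ball s ε] s] fun r => (r - s) ^ 1 := by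
    simpa only [pow_one] using hf'.isLittleO.mono nhdsWithin_le_nhds
  have hrem := (convex_ball s ε).isLittleO_pow_succ_real hs hderiv hderiv_isLittleO
  rw [Metric.isOpen_ball.nhdsWithin_eq hs] at hrem
  simpa using hrem

theorem tendsto_inv_sq_smul_sub_taylor_one (hf : ∀ᶠ r in 𝓝 s, HasDerivAt f (f' r) r)
    (hf' : HasDerivAt f' f'' s) :
    Tendsto (fun r => ((r - s) ^ 2)⁻¹ • (f r - f s - (r - s) • f' s)) (𝓝[≠] s)
      (𝓝 ((2 : ℝ)⁻¹ • f'')) := by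
  have hrem := ((isLittleO_sub_taylor_two hf hf').mono
    (nhdsWithin_le_nhds (s := {s}ᶜ))).tendsto_inv_smul_nhds_zero
  rw [← tendsto_sub_nhds_zero_iff]
  refine hrem.congr' ?_
  filter_upwards [self_mem_nhdsWithin] with r hr
  have hr₀ : r - s ≠ 0 := sub_ne_zero.mpr hr
  have hcoeff : ((r - s) ^ 2)⁻¹ * ((r - s) ^ 2 / 2) = 2⁻¹ := by field_simp
  rw [smul_sub, smul_smul, hcoeff]

end SecondOrder

section Curve

variable {u u' c : ℝ → ℝ × ℝ} {u'' : ℝ × ℝ} {s : ℝ}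

theorem det2_deriv_eq_zero {a : ℝ × ℝ} (hu : HasDerivAt u a s) (hc : ContinuousAt c s)
    (huc : ∀ᶠ r in 𝓝 s, det2 (u r - u s) (c r) = 0) : det2 a (c s) = 0 := by
  have h := hasDerivAt_det2_of_eq_zero (hu.sub_const (u s)) (sub_self _) hc
  exact h.unique ((hasDerivAt_const s 0).congr_of_eventuallyEq huc)

theorem det2_second_deriv_eq_zero (hu : ∀ᶠ r in 𝓝 s, HasDerivAt u (u' r) r) (hus : u' s = 0)
    (hu' : HasDerivAt u' u'' s) (hc : ContinuousAt c s)
    (huc : ∀ᶠ r in 𝓝 s, det2 (u r - u s) (c r) = 0) : det2 u'' (c s) = 0 := by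
  have hcoeff := tendsto_inv_sq_smul_sub_taylor_one hu hu'
  simp only [hus, smul_zero, sub_zero] at hcoeff
  have hlim := tendsto_det2 hcoeff (hc.tendsto.mono_left nhdsWithin_le_nhds)
  have hzero : ∀ᶠ r in 𝓝[≠] s, det2 (((r - s) ^ 2)⁻¹ • (u r - u s)) (c r) = 0 := by
    filter_upwards [huc.filter_mono nhdsWithin_le_nhds] with r hr
    rw [det2_smul_left, hr, mul_zero]
  have h := tendsto_nhds_unique_of_eventuallyEq hlim tendsto_const_nhds hzero
  rw [det2_smul_left] at h
  exact (mul_eq_zero.mp h).resolve_left (by norm_num)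

theorem second_deriv_eq_zero_of_det2_eq_zero {v : ℝ → ℝ × ℝ}
    (hu : ∀ᶠ r in 𝓝 s, HasDerivAt u (u' r) r) (hu' : HasDerivAt u' u'' s)
    (hc : ContinuousAt c s) (hv : ContinuousAt v s)
    (huc : ∀ᶠ r in 𝓝 s, det2 (u r - u s) (c r) = 0)
    (huv : det2 (u' s) (v s) = 0) (huv' : deriv (fun r => det2 (u' r) (v r)) s = 0)
    (hvc : det2 (v s) (c s) ≠ 0) : u'' = 0 := by
  have hus : u' s = 0 :=
    eq_zero_of_det2_eq_zero hvc huv (det2_deriv_eq_zero hu.self_of_nhds hc huc)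
  have hu''v : det2 u'' (v s) = 0 := by
    rw [← huv', (hasDerivAt_det2_of_eq_zero hu' hus hv).deriv]
  exact eq_zero_of_det2_eq_zero hvc hu''v (det2_second_deriv_eq_zero hu hus hu' hc huc)

end Curve

theorem eventually_differentiableAt_of_contDiffAt {E F : Type*} [NormedAddCommGroup E]
    [NormedSpace ℝ E] [NormedAddCommGroup F] [NormedSpace ℝ F] {f : E → F} {p : E}
    (hf : ContDiffAt ℝ 1 f p) : ∀ᶠ q in 𝓝 p, DifferentiableAt ℝ f q :=
  (hf.eventually (by simp)).mono fun _ hq => hq.differentiableAt one_ne_zero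

section Graph

variable {A B : ℝ × ℝ → ℝ} {τ : ℝ → ℝ} {τ' r : ℝ}

theorem hasDerivAt_comp_graph {F : ℝ × ℝ → ℝ} (hF : DifferentiableAt ℝ F (r, τ r))
    (hτ : HasDerivAt τ τ' r) :
    HasDerivAt (fun q => F (q, τ q)) (pds F (r, τ r) + τ' * pdt F (r, τ r)) r := by
  have hgraph : HasDerivAt (fun q => (q, τ q)) (1, τ') r := (hasDerivAt_id r).prodMk hτ
  have hbasis : ((1, τ') : ℝ × ℝ) = (1, 0) + τ' • (0, 1) := by simp
  have h := hF.hasFDerivAt.comp_hasDerivAt r hgraph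
  rwa [hbasis, map_add, map_smul, smul_eq_mul] at h

theorem hasDerivAt_xmap_graph (hA : DifferentiableAt ℝ A (r, τ r))
    (hB : DifferentiableAt ℝ B (r, τ r)) (hτ : HasDerivAt τ τ' r) :
    HasDerivAt (fun q => xmap A B (q, τ q)) (xs A B (r, τ r) + τ' • xt A B (r, τ r)) r :=
  (hasDerivAt_comp_graph hA hτ).prodMk (hasDerivAt_comp_graph hB hτ)

theorem deltaMap_eq_det2_xs_xt (A B : ℝ × ℝ → ℝ) (p : ℝ × ℝ) :
    deltaMap A B p = det2 (xs A B p) (xt A B p) := by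
  simp only [deltaMap, det2, xs, xt]
  ring

theorem deltaMap_graph_eq_det2_deriv (hA : DifferentiableAt ℝ A (r, τ r))
    (hB : DifferentiableAt ℝ B (r, τ r)) (hτ : DifferentiableAt ℝ τ r) :
    deltaMap A B (r, τ r) =
      det2 (deriv (fun q => xmap A B (q, τ q)) r) (xt A B (r, τ r)) := by
  rw [(hasDerivAt_xmap_graph hA hB hτ.hasDerivAt).deriv, det2_add_smul_self_left,
    deltaMap_eq_det2_xs_xt]

theorem eventuallyEq_deltaMap_graph (hA : ContDiffAt ℝ 1 A (r, τ r))
    (hB : ContDiffAt ℝ 1 B (r, τ r)) (hτ : ContDiffAt ℝ 1 τ r) :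
    (fun q => deltaMap A B (q, τ q)) =ᶠ[𝓝 r]
      fun q => det2 (deriv (fun q => xmap A B (q, τ q)) q) (xt A B (q, τ q)) := by
  have hgraph : ContinuousAt (fun q => (q, τ q)) r := continuousAt_id.prodMk hτ.continuousAt
  filter_upwards [hgraph.eventually (eventually_differentiableAt_of_contDiffAt hA),
    hgraph.eventually (eventually_differentiableAt_of_contDiffAt hB),
    eventually_differentiableAt_of_contDiffAt hτ] with q hAq hBq hτq
  exact deltaMap_graph_eq_det2_deriv hAq hBq hτq

theorem continuousAt_xt {p : ℝ × ℝ} (hA : ContDiffAt ℝ 1 A p) (hB : ContDiffAt ℝ 1 B p) :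
    ContinuousAt (xt A B) p :=
  ((hA.continuousAt_fderiv one_ne_zero).clm_apply continuousAt_const).prodMk
    ((hB.continuousAt_fderiv one_ne_zero).clm_apply continuousAt_const)

theorem continuousAt_cmap {C D : ℝ × ℝ → ℝ} {p : ℝ × ℝ} (hC : ContinuousAt C p)
    (hD : ContinuousAt D p) : ContinuousAt (cmap C D) p :=
  hD.neg.prodMk hC

end Graph

theorem dssx_vanishes_general {A B : ℝ × ℝ → ℝ} {c : ℝ × ℝ → ℝ × ℝ} {τ : ℝ → ℝ} {s : ℝ}
    {xb : ℝ × ℝ} (hA : ContDiffAt ℝ 2 A (s, τ s)) (hB : ContDiffAt ℝ 2 B (s, τ s))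
    (hc : ContinuousAt c (s, τ s)) (hτ : ContDiffAt ℝ 2 τ s)
    (hτeq : ∀ᶠ r in 𝓝 s, det2 (xb - xmap A B (r, τ r)) (c (r, τ r)) = 0)
    (hx : xb = xmap A B (s, τ s)) (hδ : deltaMap A B (s, τ s) = 0)
    (hδs : deriv (fun r => deltaMap A B (r, τ r)) s = 0)
    (hne : det2 (xt A B (s, τ s)) (c (s, τ s)) ≠ 0) :
    deriv (deriv (fun r => xmap A B (r, τ r))) s = 0 := by
  have hgraph : ContDiffAt ℝ 2 (fun r => (r, τ r)) s := contDiffAt_id.prodMk hτ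
  have hγ : ContDiffAt ℝ 2 (fun r => xmap A B (r, τ r)) s :=
    ContDiffAt.comp (g := xmap A B) s (hA.prodMk hB) hgraph
  have hγ' : DifferentiableAt ℝ (deriv fun r => xmap A B (r, τ r)) s :=
    (hγ.derivWithin (m := 1) (by norm_num)).differentiableAt one_ne_zero
  have hcγ : ContinuousAt (fun r => c (r, τ r)) s :=
    ContinuousAt.comp (f := fun r => (r, τ r)) hc hgraph.continuousAt
  have hA₁ := hA.of_le one_le_two
  have hB₁ := hB.of_le one_le_two
  have hτ₁ := hτ.of_le one_le_two
  have hxtγ : ContinuousAt (fun r => xt A B (r, τ r)) s :=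
    ContinuousAt.comp (f := fun r => (r, τ r)) (continuousAt_xt hA₁ hB₁) hgraph.continuousAt
  have hδ_eq := eventuallyEq_deltaMap_graph hA₁ hB₁ hτ₁
  have hγc : ∀ᶠ r in 𝓝 s,
      det2 (xmap A B (r, τ r) - xmap A B (s, τ s)) (c (r, τ r)) = 0 := by
    filter_upwards [hτeq] with r hr
    rw [← hx, ← neg_sub, det2_neg_left, hr, neg_zero]
  exact second_deriv_eq_zero_of_det2_eq_zero
    ((eventually_differentiableAt_of_contDiffAt (hγ.of_le one_le_two)).mono
      fun _ hr => hr.hasDerivAt)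
    hγ'.hasDerivAt hcγ hxtγ hγc
    (hδ_eq.self_of_nhds.symm.trans hδ) (hδ_eq.deriv_eq.symm.trans hδs) hne

theorem dssx_vanishes
    (Ω : Set (ℝ × ℝ)) (hΩ : IsOpen Ω)
    (A B C D : ℝ × ℝ → ℝ)
    (hA : ContDiffOn ℝ (⊤ : ℕ∞) A Ω) (hB : ContDiffOn ℝ (⊤ : ℕ∞) B Ω)
    (hC : ContDiffOn ℝ (⊤ : ℕ∞) C Ω) (hD : ContDiffOn ℝ (⊤ : ℕ∞) D Ω)
    (hCR1 : ∀ p ∈ Ω, pds A p = - pdt D p)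
    (hCR2 : ∀ p ∈ Ω, pdt A p = pds D p)
    (hCR3 : ∀ p ∈ Ω, pds B p = pdt C p)
    (hCR4 : ∀ p ∈ Ω, pdt B p = - pds C p)
    (s₀ t₀ : ℝ) (hst₀ : (s₀, t₀) ∈ Ω)
    (hne₀ : det2 (xt A B (s₀, t₀)) (cmap C D (s₀, t₀)) ≠ 0)
    (I : Set ℝ) (U : Set (ℝ × ℝ)) (hI : IsOpen I) (hU : IsOpen U)
    (hs₀ : s₀ ∈ I) (hx₀ : xmap A B (s₀, t₀) ∈ U)
    (T : ℝ → ℝ × ℝ → ℝ)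
    (hT : ContDiffOn ℝ (⊤ : ℕ∞) (fun q : ℝ × (ℝ × ℝ) => T q.1 q.2) (I ×ˢ U))
    (hT₀ : T s₀ (xmap A B (s₀, t₀)) = t₀)
    (hTmem : ∀ s ∈ I, ∀ xb ∈ U, (s, T s xb) ∈ Ω)
    (hTeq : ∀ s ∈ I, ∀ xb ∈ U,
      det2 (xb - xmap A B (s, T s xb)) (cmap C D (s, T s xb)) = 0)
    (s : ℝ) (xb : ℝ × ℝ) (hs : s ∈ I) (hxb : xb ∈ U)
    (hx : xb = xmap A B (s, T s xb))
    (hδ : deltaMap A B (s, T s xb) = 0)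
    (hδs : deriv (fun s' => deltaMap A B (s', T s' xb)) s = 0)
    (hne : det2 (xt A B (s, T s xb)) (cmap C D (s, T s xb)) ≠ 0)
    :
    deriv (deriv (fun s' => xmap A B (s', T s' xb))) s = 0 := by
  have hp : Ω ∈ 𝓝 (s, T s xb) := hΩ.mem_nhds (hTmem s hs xb hxb)
  have hτ : ContDiffAt ℝ (⊤ : ℕ∞) (fun r => T r xb) s :=
    (hT.contDiffAt ((hI.prod hU).mem_nhds ⟨hs, hxb⟩)).comp s
      (f := fun r => (r, xb)) (contDiffAt_id.prodMk contDiffAt_const)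
  have hle : (2 : WithTop ℕ∞) ≤ (⊤ : ℕ∞) :=
    WithTop.coe_le_coe.mpr (le_top : (2 : ℕ∞) ≤ ⊤)
  exact dssx_vanishes_general ((hA.contDiffAt hp).of_le hle) ((hB.contDiffAt hp).of_le hle)
    (continuousAt_cmap (hC.continuousOn.continuousAt hp) (hD.continuousOn.continuousAt hp))
    (hτ.of_le hle) ((hI.eventually_mem hs).mono fun r hr => hTeq r hr xb hxb) hx hδ hδs hne
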